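/- Let α ∈ (0,1) and λ > 0. Then the one-parameter Mittag-Leffler function satisfies 0 < E_α(−λ t^α) ≤ 1 for all t ≥ 0, and t ↦ E_α(−λ t^α) is monotonically decreasing on [0,∞). -/

import Mathlib

open Set

/-- One-parameter Mittag-Leffler function `E_α(z) = Σ_m z^m / Γ(αm + 1)`. -/
noncomputable def mittagLeffler (α z : ℝ) : ℝ :=
  ∑' m : ℕ, z ^ m / Real.Gamma (α * m + 1)

lemma ml_hasSum_congr {f g : ℕ → ℝ} {s : ℝ} (h : ∀ m, f m = g m) : HasSum f s ↔ HasSum g s := by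
  rw [funext h]

/-- All-radius summability. -/
def MLEnt (c : ℕ → ℝ) : Prop := ∀ R : ℝ, 0 ≤ R → Summable fun m => |c m| * R ^ m

lemma ml_beta (u v : ℝ) (hu : 0 < u) (hv : 0 < v) :
    IntervalIntegrable (fun x : ℝ => x ^ (u-1) * (1-x) ^ (v-1)) MeasureTheory.volume 0 1 ∧
    ∫ x in (0:ℝ)..1, x ^ (u-1) * (1-x) ^ (v-1) =
      Real.Gamma u * Real.Gamma v / Real.Gamma (u+v) := by
  have key : ∀ x ∈ uIcc (0:ℝ) 1, ((x:ℂ) ^ ((u:ℂ)-1) * (1-(x:ℂ)) ^ ((v:ℂ)-1)) =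
      ((x ^ (u-1) * (1-x) ^ (v-1) : ℝ) : ℂ) := by
    intro x hx
    rw [uIcc_of_le zero_le_one] at hx
    push_cast
    rw [Complex.ofReal_cpow hx.1, Complex.ofReal_cpow (by linarith [hx.2])]
    push_cast
    rfl
  have hc := Complex.betaIntegral_convergent (u := u) (v := v) (by simpa) (by simpa)
  constructor
  · rw [intervalIntegrable_iff] at hc ⊢
    have := hc.re
    refine MeasureTheory.IntegrableOn.congr_fun this ?_ measurableSet_uIoc
    intro x hx
    simp only [key x (uIoc_subset_uIcc hx)]
    simp
  · have h := Complex.betaIntegral_eq_Gamma_mul_div u v (by simpa) (by simpa)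
    rw [Complex.betaIntegral, intervalIntegral.integral_congr (g := fun x : ℝ => ((x ^ (u-1) * (1-x) ^ (v-1) : ℝ) : ℂ)) (fun x hx => key x hx), intervalIntegral.integral_ofReal, ← Complex.ofReal_add,
      Complex.Gamma_ofReal, Complex.Gamma_ofReal, Complex.Gamma_ofReal] at h
    exact_mod_cast h

lemma ml_gamma_lower (M s : ℝ) (hM : 0 < M) (hs : 0 < s) :
    M ^ s * (Real.exp (-(M+1)) / (M+1)) ≤ Real.Gamma s := by
  rw [Real.Gamma_eq_integral hs]
  have h1 : ∫ x in Ioc M (M+1), M ^ s * (Real.exp (-(M+1)) / (M+1)) = M ^ s * (Real.exp (-(M+1)) / (M+1)) := by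
    simp
  rw [← h1]
  have hi := Real.GammaIntegral_convergent hs
  have hsub : Ioc M (M+1) ⊆ Ioi 0 := fun x hx => hM.trans hx.1
  refine le_trans (MeasureTheory.setIntegral_mono_on (MeasureTheory.integrableOn_const (by simp)) (hi.mono_set hsub) measurableSet_Ioc ?_)
    (MeasureTheory.setIntegral_mono_set hi ?_ hsub.eventuallyLE)
  · intro x hx
    have hx0 : 0 < x := hM.trans hx.1
    rw [Real.rpow_sub_one hx0.ne']
    have a1 : M ^ s ≤ x ^ s := Real.rpow_le_rpow hM.le hx.1.le hs.le
    have a2 : Real.exp (-(M+1)) ≤ Real.exp (-x) := Real.exp_le_exp.2 (by linarith [hx.2])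
    calc M ^ s * (Real.exp (-(M+1)) / (M+1)) ≤ x ^ s * (Real.exp (-x) / x) := by
          gcongr
          exact hx.2
      _ = _ := by ring
  · refine (MeasureTheory.ae_restrict_iff' measurableSet_Ioi).2 (Filter.Eventually.of_forall ?_)
    intro x hx
    have : (0:ℝ) < x := hx
    simp only [Pi.zero_apply]
    positivity

lemma ml_ent (α β : ℝ) (hα : 0 < α) (hβ : 0 < β) :
    MLEnt (fun m => (-1) ^ m / Real.Gamma (α * m + β)) := by
  intro R hR
  set M : ℝ := (2 * (R+1)) ^ (1/α) with hMdef
  have hM : 0 < M := by positivity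
  have hMα : M ^ α = 2 * (R+1) := by
    rw [hMdef, ← Real.rpow_mul (by positivity)]
    field_simp
    simp
  set C : ℝ := Real.exp (-(M+1)) / (M+1) with hC
  have hCpos : 0 < C := by positivity
  refine Summable.of_nonneg_of_le (fun m => by positivity) (fun m => ?_)
    ((summable_geometric_two).mul_left (1 / (M ^ β * C)))
  have hg := ml_gamma_lower M (α * m + β) hM (by positivity)
  rw [← hC, Real.rpow_add hM, Real.rpow_mul hM.le, hMα, Real.rpow_natCast] at hg
  have hgp : 0 < Real.Gamma (α * m + β) := Real.Gamma_pos_of_pos (by positivity)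
  rw [abs_div, abs_pow, abs_neg, abs_one, one_pow, abs_of_pos hgp]
  calc 1 / Real.Gamma (α * m + β) * R ^ m
      ≤ 1 / ((2*(R+1)) ^ m * M ^ β * C) * (R+1) ^ m := by
        gcongr
        linarith
    _ = _ := by
        rw [mul_pow]
        field_simp
        rw [← mul_pow]; norm_num

lemma ml_ent_deriv {c : ℕ → ℝ} (hc : MLEnt c) : MLEnt (fun m => m * c m) := by
  intro R hR
  refine Summable.of_nonneg_of_le (fun m => by positivity) (fun m => ?_) (hc (2*R) (by positivity))
  have : (m:ℝ) ≤ 2 ^ m := by exact_mod_cast Nat.lt_two_pow_self.le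
  rw [abs_mul, Nat.abs_cast, mul_pow]
  calc (m:ℝ) * |c m| * R ^ m ≤ 2 ^ m * |c m| * R ^ m := by gcongr
    _ = _ := by ring

lemma ml_ent_summable {c : ℕ → ℝ} (hc : MLEnt c) (x : ℝ) : Summable fun m => c m * x ^ m := by
  refine Summable.of_norm ?_
  refine (hc |x| (abs_nonneg x)).congr fun m => ?_
  rw [Real.norm_eq_abs, abs_mul, abs_pow]

lemma ml_hasDerivAt {c : ℕ → ℝ} (hc : MLEnt c) (x : ℝ) :
    HasDerivAt (fun y => ∑' m, c m * y ^ m) (∑' m : ℕ, c m * (m * x ^ (m-1))) x := by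
  set R : ℝ := |x| + 1
  have hR : 1 ≤ R := by simp [R]
  refine hasDerivAt_tsum_of_isPreconnected (ml_ent_deriv hc R (by positivity)) Metric.isOpen_ball
    (convex_ball (0:ℝ) R).isPreconnected (y₀ := x) (fun m y _ => (hasDerivAt_pow m y).const_mul _) ?_ ?_
    (ml_ent_summable hc x) ?_
  · intro m y hy
    have hy' : |y| ≤ R := by simpa using (mem_ball_zero_iff.1 hy).le
    rw [Real.norm_eq_abs, abs_mul, abs_mul, abs_mul, Nat.abs_cast, abs_pow]
    have : |y| ^ (m-1) ≤ R ^ m :=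
      (pow_le_pow_left₀ (abs_nonneg y) hy' _).trans (pow_le_pow_right₀ hR (by omega))
    calc |c m| * (m * |y| ^ (m-1)) ≤ |c m| * (m * R ^ m) := by gcongr
      _ = _ := by ring
  · simp [R]
  · simp [R]

lemma ml_cont {c : ℕ → ℝ} (hc : MLEnt c) : Continuous (fun y => ∑' m, c m * y ^ m) :=
  continuous_iff_continuousAt.2 fun x => (ml_hasDerivAt hc x).continuousAt

lemma ml_integral {c : ℕ → ℝ} (hc : MLEnt c) (α γ x : ℝ) (hα : 0 < α) (hγ : 0 < γ) :
    IntervalIntegrable (fun θ : ℝ => (θ ^ (α-1) * (1-θ) ^ (γ-1)) * ∑' m, c m * (x * θ ^ α) ^ m)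
      MeasureTheory.volume 0 1 ∧
    HasSum (fun m : ℕ => c m * x ^ m *
        (Real.Gamma (α * m + α) * Real.Gamma γ / Real.Gamma (α * m + α + γ)))
      (∫ θ in (0:ℝ)..1, (θ ^ (α-1) * (1-θ) ^ (γ-1)) * ∑' m, c m * (x * θ ^ α) ^ m) := by
  have hw := (ml_beta α γ hα hγ).1
  constructor
  · refine hw.mul_continuousOn (Continuous.continuousOn ?_)
    exact (ml_cont hc).comp (continuous_const.mul (Real.continuous_rpow_const hα.le))
  · have h1 : ∀ m : ℕ, ∀ θ ∈ uIoc (0:ℝ) 1, c m * x ^ m * (θ ^ (α * m + α - 1) * (1-θ) ^ (γ-1)) =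
        (θ ^ (α-1) * (1-θ) ^ (γ-1)) * (c m * (x * θ ^ α) ^ m) := by
      intro m θ hθ
      rw [uIoc_of_le zero_le_one] at hθ
      rw [mul_pow, ← Real.rpow_natCast (θ ^ α) m, ← Real.rpow_mul hθ.1.le,
        show α * m + α - 1 = (α - 1) + α * m by ring, Real.rpow_add hθ.1]
      ring
    have h2 : ∀ m : ℕ, c m * x ^ m *
        (Real.Gamma (α * m + α) * Real.Gamma γ / Real.Gamma (α * m + α + γ)) =
        ∫ θ in (0:ℝ)..1, c m * x ^ m * (θ ^ (α * m + α - 1) * (1-θ) ^ (γ-1)) := by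
      intro m
      rw [intervalIntegral.integral_const_mul, (ml_beta (α*m+α) γ (by positivity) hγ).2]
    simp_rw [h2]
    have hsum := hc |x| (abs_nonneg x)
    refine intervalIntegral.hasSum_integral_of_dominated_convergence
      (fun m θ => (|c m| * |x| ^ m) * (θ ^ (α-1) * (1-θ) ^ (γ-1))) ?_ ?_ ?_ ?_ ?_
    · intro m
      have := ((ml_beta (α*m+α) γ (by positivity) hγ).1.const_mul (c m * x ^ m))
      rw [intervalIntegrable_iff] at this
      exact this.aestronglyMeasurable
    · intro m
      refine Filter.Eventually.of_forall fun θ hθ => ?_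
      rw [h1 m θ hθ]
      rw [uIoc_of_le zero_le_one] at hθ
      have a0 : 0 ≤ 1 - θ := by linarith [hθ.2]
      have a1 : 0 ≤ θ ^ (α-1) * (1-θ) ^ (γ-1) :=
        mul_nonneg (Real.rpow_nonneg hθ.1.le _) (Real.rpow_nonneg a0 _)
      have a2 : 0 ≤ θ ^ α := Real.rpow_nonneg hθ.1.le _
      rw [Real.norm_eq_abs, abs_mul, abs_of_nonneg a1, abs_mul, abs_pow, abs_mul, abs_of_nonneg a2,
        mul_comm]
      gcongr
      exact mul_le_of_le_one_right (abs_nonneg x) (Real.rpow_le_one hθ.1.le hθ.2 hα.le)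
    · exact Filter.Eventually.of_forall fun θ _ => hsum.mul_right _
    · simp_rw [tsum_mul_right]
      exact hw.const_mul _
    · refine Filter.Eventually.of_forall fun θ hθ => ?_
      rw [ml_hasSum_congr (fun m => h1 m θ hθ)]
      exact (ml_ent_summable hc (x * θ ^ α)).hasSum.mul_left _

/-- Coefficients of `E_{α,α}(-x)`. -/
noncomputable def mlA (α : ℝ) (m : ℕ) : ℝ := (-1) ^ m / Real.Gamma (α * m + α)

/-- `E_{α,α}(-x)`. -/
noncomputable def mlF (α x : ℝ) : ℝ := ∑' m, mlA α m * x ^ m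

/-- derivative of `mlF`. -/
noncomputable def mlF' (α x : ℝ) : ℝ := ∑' m : ℕ, mlA α m * (m * x ^ (m-1))

/-- derivative of `x * mlF`. -/
noncomputable def mlP (α x : ℝ) : ℝ := ∑' m : ℕ, ((m + 1) * mlA α m) * x ^ m

lemma mlA_ent (α : ℝ) (hα : 0 < α) : MLEnt (mlA α) := ml_ent α α hα hα

lemma mlA_ent1 (α : ℝ) (hα : 0 < α) : MLEnt (fun m => (m + 1) * mlA α m) := by
  intro R hR
  refine Summable.of_nonneg_of_le (fun m => by positivity) (fun m => ?_)
    ((ml_ent_deriv (mlA_ent α hα) R hR).add (mlA_ent α hα R hR))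
  rw [← add_mul]
  gcongr
  simp only [add_mul, one_mul]
  exact abs_add_le _ _

lemma mlF_hasDerivAt (α x : ℝ) (hα : 0 < α) : HasDerivAt (mlF α) (mlF' α x) x :=
  ml_hasDerivAt (mlA_ent α hα) x

lemma mlF_cont (α : ℝ) (hα : 0 < α) : Continuous (mlF α) := ml_cont (mlA_ent α hα)

lemma mlP_eq (α x : ℝ) (hα : 0 < α) : mlP α x = mlF α x + x * mlF' α x := by
  have h1 := ml_ent_summable (mlA_ent α hα) x
  have h2 := ml_ent_summable (ml_ent_deriv (mlA_ent α hα)) x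
  have h3 : x * mlF' α x = ∑' m : ℕ, (m * mlA α m) * x ^ m := by
    rw [mlF', ← tsum_mul_left]
    refine tsum_congr fun m => ?_
    rcases m with _ | m
    · simp
    · simp only [Nat.add_sub_cancel]; ring
  rw [h3, mlF, mlP, ← h1.tsum_add h2]
  exact tsum_congr fun m => by ring

lemma ml_I1 (α x : ℝ) (hα : 0 < α) :
    Real.Gamma α * mlF α x =
      1 - x * ∫ θ in (0:ℝ)..1, (θ ^ (α-1) * (1-θ) ^ (α-1)) * mlF α (x * θ ^ α) := by
  have h := ((ml_integral (mlA_ent α hα) α α x hα hα).2.mul_left x)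
  have hG := Real.Gamma_pos_of_pos hα
  have h' : HasSum (fun m : ℕ => -Real.Gamma α * (mlA α (m+1) * x ^ (m+1)))
     (x * ∫ θ in (0:ℝ)..1, (θ ^ (α-1) * (1-θ) ^ (α-1)) * mlF α (x * θ ^ α)) := by
    refine (ml_hasSum_congr fun m => ?_).1 h
    have := Real.Gamma_pos_of_pos (show 0 < α * m + α by positivity)
    simp only [mlA]
    push_cast
    rw [show α * ((m:ℝ) + 1) + α = α * m + α + α by ring]
    field_simp
    ring
  have h2 := ((ml_ent_summable (mlA_ent α hα) x).hasSum.mul_left (-Real.Gamma α))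
  have h3 := (hasSum_nat_add_iff' 1).2 h2
  have h4 := h'.unique h3
  rw [h4]
  simp only [mlF, mlA]
  simp
  field_simp
  ring

lemma ml_I3 (α x : ℝ) (hα : 0 < α) :
    ∫ θ in (0:ℝ)..1, (θ ^ (α-1) * (1-θ) ^ (α-1)) * mlP α (x * θ ^ α) =
      - Real.Gamma α * mlF' α x := by
  have h := ((ml_integral (mlA_ent1 α hα) α α x hα hα).2)
  have hG := Real.Gamma_pos_of_pos hα
  have h' : HasSum (fun m : ℕ => -Real.Gamma α * (mlA α (m+1) * ((m+1 : ℕ) * x ^ (m+1-1))))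
     (∫ θ in (0:ℝ)..1, (θ ^ (α-1) * (1-θ) ^ (α-1)) * mlP α (x * θ ^ α)) := by
    refine (ml_hasSum_congr fun m => ?_).1 h
    have := Real.Gamma_pos_of_pos (show 0 < α * m + α by positivity)
    simp only [mlA, Nat.add_sub_cancel]
    push_cast
    rw [show α * ((m:ℝ) + 1) + α = α * m + α + α by ring]
    field_simp
    ring
  have h3 := (hasSum_nat_add_iff (f := fun m : ℕ => -Real.Gamma α * (mlA α m * (m * x ^ (m-1)))) 1).1 h'
  have h4 := h3.tsum_eq
  rw [tsum_mul_left] at h4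
  simp at h4
  rw [← h4, mlF', neg_mul]

lemma ml_I2 (α x : ℝ) (hα : 0 < α) :
    mittagLeffler α (-x) =
      1 - x * ∫ θ in (0:ℝ)..1, (θ ^ (α-1) * (1-θ) ^ ((1:ℝ)-1)) * mlF α (x * θ ^ α) := by
  have h := ((ml_integral (mlA_ent α hα) α 1 x hα one_pos).2.mul_left (-x))
  have h' : HasSum (fun m : ℕ => (-x) ^ (m+1) / Real.Gamma (α * (m+1 : ℕ) + 1))
     (-x * ∫ θ in (0:ℝ)..1, (θ ^ (α-1) * (1-θ) ^ ((1:ℝ)-1)) * mlF α (x * θ ^ α)) := by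
    refine (ml_hasSum_congr fun m => ?_).1 h
    have := Real.Gamma_pos_of_pos (show 0 < α * m + α by positivity)
    simp only [mlA]
    push_cast
    rw [show α * ((m:ℝ) + 1) + 1 = α * m + α + 1 by ring, Real.Gamma_one, neg_pow x (m+1)]
    field_simp
    ring
  have h3 := (hasSum_nat_add_iff (f := fun m : ℕ => (-x) ^ m / Real.Gamma (α * m + 1)) 1).1 h'
  rw [mittagLeffler, h3.tsum_eq]
  simp
  ring

lemma ml_hasDeriv_e (α x : ℝ) (hα : 0 < α) :
    HasDerivAt (fun y => mittagLeffler α (-y)) (-(mlF α x / α)) x := by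
  have h := ml_hasDerivAt (ml_ent α 1 hα one_pos) x
  have h1 : (fun y => mittagLeffler α (-y)) =
      fun y => ∑' m : ℕ, ((-1) ^ m / Real.Gamma (α * m + 1)) * y ^ m := by
    funext y
    rw [mittagLeffler]
    refine tsum_congr fun m => ?_
    rw [neg_pow]; ring
  rw [h1]
  convert h using 1
  have h2 := (ml_ent_summable (mlA_ent α hα) x).hasSum.mul_left (-(1/α))
  have h' : HasSum (fun m : ℕ => ((-1) ^ (m+1) / Real.Gamma (α * (m+1 : ℕ) + 1)) * ((m+1 : ℕ) * x ^ (m+1-1)))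
     (-(1/α) * mlF α x) := by
    refine (ml_hasSum_congr fun m => ?_).1 h2
    have h0 : 0 < α * m + α := by positivity
    have := Real.Gamma_pos_of_pos h0
    simp only [mlA, Nat.add_sub_cancel]
    push_cast
    rw [show α * ((m:ℝ) + 1) + 1 = (α * m + α) + 1 by ring, Real.Gamma_add_one h0.ne']
    have : 0 < (m:ℝ) + 1 := by positivity
    rw [show α * (m:ℝ) + α = α * (m + 1) by ring] at *
    field_simp
    ring
  have h3 := (hasSum_nat_add_iff (f := fun m : ℕ => ((-1) ^ m / Real.Gamma (α * m + 1)) * (m * x ^ (m-1))) 1).1 h'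
  rw [h3.tsum_eq]
  simp
  ring

lemma ml_key (α x : ℝ) (hα : 0 < α) (hα1 : α < 1) (hx : 0 < x)
    (hpos : ∀ y, 0 ≤ y → y < x → 0 < mlF α y) (h0 : mlF α x = 0) : 0 < mlF' α x := by
  set q : ℝ → ℝ := fun θ => (x * θ ^ α) * mlF α (x * θ ^ α) with hq
  have hqc : Continuous q := by
    have h1 : Continuous fun θ : ℝ => x * θ ^ α :=
      continuous_const.mul (Real.continuous_rpow_const hα.le)
    exact h1.mul ((mlF_cont α hα).comp h1)
  have hqd : ∀ θ : ℝ, 0 < θ → HasDerivAt q (x * α * (θ ^ (α-1) * mlP α (x * θ ^ α))) θ := by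
    intro θ hθ
    have h1 : HasDerivAt (fun θ : ℝ => x * θ ^ α) (x * (α * θ ^ (α-1))) θ :=
      (Real.hasDerivAt_rpow_const (Or.inl hθ.ne')).const_mul x
    have h2 := h1.mul ((mlF_hasDerivAt α (x * θ ^ α) hα).comp θ h1)
    refine h2.congr_deriv ?_
    rw [mlP_eq α _ hα]
    simp only [Function.comp]
    ring
  have hq1 : q 1 = 0 := by simp [hq, h0]
  have hq0 : q 0 = 0 := by simp [hq, Real.zero_rpow hα.ne']
  have hqpos : ∀ θ ∈ Ioo (0:ℝ) 1, 0 < q θ := by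
    intro θ hθ
    have a1 : 0 < θ ^ α := Real.rpow_pos_of_pos hθ.1 _
    have a2 : θ ^ α < 1 := Real.rpow_lt_one hθ.1.le hθ.2 hα
    have a3 : 0 < x * θ ^ α := by positivity
    exact mul_pos a3 (hpos _ a3.le (by nlinarith))
  set H : ℝ → ℝ := fun θ => (1-θ) ^ (α-1) * q θ with hH
  have hHc : ContinuousOn H (Icc 0 1) := by
    have hd : Continuous (dslope q 1) := by
      rw [← continuousOn_univ, continuousOn_dslope Filter.univ_mem]
      exact ⟨hqc.continuousOn, (hqd 1 one_pos).differentiableAt⟩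
    have : Continuous fun θ : ℝ => -((1-θ) ^ α * dslope q 1 θ) :=
      (((Real.continuous_rpow_const hα.le).comp (continuous_const.sub continuous_id)).mul hd).neg
    refine this.continuousOn.congr ?_
    intro θ hθ
    rcases eq_or_lt_of_le hθ.2 with h | h
    · simp [hH, h, hq1, Real.zero_rpow hα.ne']
    · have h1 : 0 < 1 - θ := by linarith
      have h2 : θ - 1 ≠ 0 := by linarith
      simp only [hH]
      rw [dslope_of_ne _ h.ne, slope_def_field, hq1, Real.rpow_sub_one h1.ne', sub_zero]
      have : θ - 1 = -(1 - θ) := by ring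
      rw [this]
      field_simp
  set φ : ℝ → ℝ := fun θ =>
    x * α * ((θ ^ (α-1) * (1-θ) ^ (α-1)) * mlP α (x * θ ^ α)) + (1-α) * q θ with hφ
  have hi1 : IntervalIntegrable (fun θ : ℝ =>
      x * α * ((θ ^ (α-1) * (1-θ) ^ (α-1)) * mlP α (x * θ ^ α))) MeasureTheory.volume 0 1 :=
    ((ml_integral (mlA_ent1 α hα) α α x hα hα).1).const_mul _
  have hi2 : IntervalIntegrable (fun θ : ℝ => (1-α) * q θ) MeasureTheory.volume 0 1 :=
    (continuous_const.mul hqc).intervalIntegrable _ _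
  have hle := intervalIntegral.integral_le_sub_of_hasDeriv_right_of_le (g := H) (φ := φ)
    (g' := fun θ => x * α * ((θ ^ (α-1) * (1-θ) ^ (α-1)) * mlP α (x * θ ^ α))
      + (1-α) * (1-θ) ^ (α-1-1) * q θ) zero_le_one hHc ?_
    ((intervalIntegrable_iff_integrableOn_Icc_of_le zero_le_one).1 (hi1.add hi2)) ?_
  · rw [hφ, intervalIntegral.integral_add hi1 hi2, intervalIntegral.integral_const_mul,
      intervalIntegral.integral_const_mul, ml_I3 α x hα] at hle
    have hqi : 0 < ∫ θ in (0:ℝ)..1, q θ :=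
      intervalIntegral.intervalIntegral_pos_of_pos_on (hqc.intervalIntegrable _ _) hqpos one_pos
    have hz : H 1 - H 0 = 0 := by simp [hH, hq1, hq0]
    rw [hz] at hle
    have hG := Real.Gamma_pos_of_pos hα
    have h5 : 0 < (1-α) * ∫ θ in (0:ℝ)..1, q θ := mul_pos (by linarith) hqi
    have h6 : 0 < (x * α * Real.Gamma α) * mlF' α x := by nlinarith
    exact pos_of_mul_pos_right h6 (by positivity)
  · intro θ hθ
    have h1 : (1:ℝ) - θ ≠ 0 := by linarith [hθ.2]
    have h2 : HasDerivAt (fun θ : ℝ => (1-θ) ^ (α-1)) (-1 * (α-1) * (1-θ) ^ (α-1-1)) θ :=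
      ((hasDerivAt_id θ).const_sub 1).rpow_const (Or.inl h1)
    refine ((h2.mul (hqd θ hθ.1)).congr_deriv ?_).hasDerivWithinAt
    ring
  · intro θ hθ
    have h1 : 0 < 1 - θ := by linarith [hθ.2]
    have h2 : 1 ≤ (1-θ) ^ (α-1-1) :=
      Real.one_le_rpow_of_pos_of_le_one_of_nonpos h1 (by linarith [hθ.1]) (by linarith)
    have h3 := hqpos θ hθ
    have h4 : 0 ≤ (1-α) * q θ := mul_nonneg (by linarith) h3.le
    simp only [hφ]
    nlinarith

lemma mlF_pos (α : ℝ) (hα : 0 < α) (hα1 : α < 1) (x : ℝ) (hx : 0 ≤ x) : 0 < mlF α x := by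
  by_contra hcon
  push Not at hcon
  have hc := mlF_cont α hα
  have hF0 : 0 < mlF α 0 := by
    have := ml_I1 α 0 hα
    rw [zero_mul, sub_zero] at this
    have hG := Real.Gamma_pos_of_pos hα
    exact pos_of_mul_pos_right (by rw [this]; exact one_pos) hG.le
  have hK : IsCompact (Icc 0 x ∩ {y | mlF α y ≤ 0}) :=
    isCompact_Icc.inter_right (isClosed_le hc continuous_const)
  obtain ⟨z, ⟨hz1, hz2⟩, hz3⟩ := hK.exists_isLeast ⟨x, ⟨hx, le_rfl⟩, hcon⟩
  have hz0 : 0 < z := by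
    rcases eq_or_lt_of_le hz1.1 with h | h
    · rw [← h] at hz2
      exact absurd hF0 (not_lt.2 hz2)
    · exact h
  have hpos : ∀ y, 0 ≤ y → y < z → 0 < mlF α y := by
    intro y hy hyz
    by_contra h
    push Not at h
    exact absurd (hz3 ⟨⟨hy, hyz.le.trans hz1.2⟩, h⟩) (not_le.2 hyz)
  have hfz : mlF α z = 0 := by
    refine le_antisymm hz2 ?_
    have hev : ∀ᶠ y in nhdsWithin z (Iio z), 0 ≤ mlF α y := by
      filter_upwards [Ioo_mem_nhdsLT hz0] with y hy using (hpos y hy.1.le hy.2).le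
    exact ge_of_tendsto (hc.continuousAt.mono_left nhdsWithin_le_nhds) hev
  have hd := ml_key α z hα hα1 hz0 hpos hfz
  have hslope := (mlF_hasDerivAt α z hα).tendsto_slope
  have hle : mlF' α z ≤ 0 := by
    have hev : ∀ᶠ y in nhdsWithin z (Iio z), slope (mlF α) z y ≤ 0 := by
      filter_upwards [Ioo_mem_nhdsLT hz0] with y hy
      rw [slope_def_field, hfz, sub_zero]
      exact div_nonpos_of_nonneg_of_nonpos (hpos y hy.1.le hy.2).le (by linarith [hy.2])
    refine le_of_tendsto (hslope.mono_left (nhdsWithin_mono z ?_)) hev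
    intro y hy
    exact (ne_of_lt hy : y ≠ z)
  linarith

lemma ml_e_pos (α : ℝ) (hα : 0 < α) (hα1 : α < 1) (x : ℝ) (hx : 0 ≤ x) :
    0 < mittagLeffler α (-x) := by
  have h1 := ml_I1 α x hα
  have h2 := ml_I2 α x hα
  have hF := mlF_pos α hα hα1 x hx
  have hG := Real.Gamma_pos_of_pos hα
  have hmono : ∫ θ in (0:ℝ)..1, (θ ^ (α-1) * (1-θ) ^ ((1:ℝ)-1)) * mlF α (x * θ ^ α) ≤
      ∫ θ in (0:ℝ)..1, (θ ^ (α-1) * (1-θ) ^ (α-1)) * mlF α (x * θ ^ α) := by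
    refine intervalIntegral.integral_mono_on_of_le_Ioo zero_le_one
      (ml_integral (mlA_ent α hα) α 1 x hα one_pos).1 (ml_integral (mlA_ent α hα) α α x hα hα).1 ?_
    intro θ hθ
    have a1 : 0 < 1 - θ := by linarith [hθ.2]
    have a2 : 0 < θ := hθ.1
    have a3 : 0 < mlF α (x * θ ^ α) := mlF_pos α hα hα1 _ (by positivity)
    have a4 : (1-θ) ^ ((1:ℝ)-1) ≤ (1-θ) ^ (α-1) :=
      Real.rpow_le_rpow_of_exponent_ge a1 (by linarith) (by linarith)
    gcongr
  have := mul_le_mul_of_nonneg_left hmono hx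
  have := mul_pos hG hF
  linarith

/-- For `α ∈ (0,1)` and `λ > 0`, `0 < E_α(−λt^α) ≤ 1` for all `t ≥ 0` and
`t ↦ E_α(−λt^α)` is monotonically decreasing on `[0,∞)`. -/
theorem mittagLeffler_pos_le_one_antitone
    (α lam : ℝ) (hα : α ∈ Ioo (0:ℝ) 1) (hlam : 0 < lam) :
    (∀ t : ℝ, 0 ≤ t →
      0 < mittagLeffler α (-lam * t ^ α) ∧ mittagLeffler α (-lam * t ^ α) ≤ 1)
    ∧ AntitoneOn (fun t : ℝ => mittagLeffler α (-lam * t ^ α)) (Ici 0) := by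
  obtain ⟨h0, h1⟩ := hα
  have hanti : AntitoneOn (fun y => mittagLeffler α (-y)) (Ici 0) := by
    refine antitoneOn_of_deriv_nonpos (convex_Ici 0)
      (fun y _ => (ml_hasDeriv_e α y h0).continuousAt.continuousWithinAt)
      (fun y _ => (ml_hasDeriv_e α y h0).differentiableAt.differentiableWithinAt) ?_
    intro y hy
    rw [(ml_hasDeriv_e α y h0).deriv]
    have hy' : 0 ≤ y := interior_subset hy
    have := mlF_pos α h0 h1 y hy'
    have : 0 < mlF α y / α := by positivity
    linarith
  have hz : mittagLeffler α (-0) = 1 := by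
    rw [ml_I2 α 0 h0]; simp
  refine ⟨fun t ht => ?_, ?_⟩
  · have hx : 0 ≤ lam * t ^ α := by positivity
    rw [neg_mul]
    refine ⟨ml_e_pos α h0 h1 _ hx, ?_⟩
    rw [← hz]
    exact hanti (mem_Ici.2 le_rfl) (mem_Ici.2 hx) hx
  · intro s hs t ht hst
    have hs' : (0:ℝ) ≤ s := hs
    have ht' : (0:ℝ) ≤ t := ht
    simp only [neg_mul]
    refine hanti (mem_Ici.2 (by positivity)) (mem_Ici.2 (by positivity)) ?_
    gcongr
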